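/- arXiv:math/0607183 — 2 statements merged into one kernel-verified Lean document; each statement's English description precedes it below -/
import Mathlib

section
/- Let a, b, c ≥ 0, let α_1, …, α_{b+c} be pairwise distinct complex numbers, and let β_1, …, β_{a+c}, γ_1, …, γ_{a+b} be complex numbers with α_i ≠ β_j for all i, j. Then Φ_{a,b,c}(α; β; γ) = [ ∏_{(i,j) : 1 ≤ i ≤ b+c, 1 ≤ j ≤ a+c, c < i+j ≤ a+b+c+1} (α_i − β_j) ] · det_{1 ≤ ℓ, m ≤ c} M, where the c × c matrix M has entries M_{ℓ,m} = Σ_{i=ℓ}^{b+m} [ ∏_{k=1}^{a+b} (α_i − γ_k) ] / [ ∏_{i' = ℓ, i' ≠ i}^{b+m} (α_i − α_{i'}) · ∏_{j = c+1−ℓ}^{a+c+1−m} (α_i − β_j) ] (empty sums are 0, empty products are 1, and for c = 0 the determinant of the empty matrix is 1). (This is the determinant formula, Eq. (3.6) of the paper, obtained from the Lindström–Gessel–Viennot evaluation of the plane-partition partition function.) -/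
/-- Eq. (2.6) of the paper: the explicit formula for the component of the O(1) loop model
ground state corresponding to three series of nested arches of sizes `a`, `b`, `c`. -/
noncomputable def Phi (a b c : ℕ) (α : Fin (b + c) → ℂ) (β : Fin (a + c) → ℂ)
    (γ : Fin (a + b) → ℂ) : ℂ :=
  ∑ I ∈ Finset.powersetCard c (Finset.univ : Finset (Fin (b + c))),
    ((∏ i ∈ Iᶜ, ∏ j, (α i - β j)) * ∏ i ∈ I, ∏ k, (α i - γ k)) /
      ∏ i ∈ I, ∏ j ∈ Iᶜ, (α i - α j)

/-!
Each entry of the matrix is a divided difference of `g(x) / ∏_j (x - β_j)` over a window of the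
nodes `α_i`, where `g(x) = ∏_k (x - γ_k)` and `j` also runs over a window. A divided difference over
some of the nodes becomes one over all nodes once the function is multiplied by the factors
`x - α_i` of the omitted nodes. Moving the missing factors `x - β_j` to the numerator as well (where
a factor would be moved twice, both divided differences vanish for degree reasons) writes the
matrix as `A * B`, where row `l` of `A` lists the values at the nodes of a polynomial of degree
`c - 1`, and `B` is the transpose of such a matrix up to row weights. By Cauchy–Binet the
determinant is then a sum over `c`-element sets of nodes of products of two minors, each a constant
times a Vandermonde determinant. The two constants are the products of `α_i - β_j` over the two
corners missing from the prefactor.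
-/

section Development

open Finset Lagrange Matrix Polynomial

section CauchyBinet

variable {R m n : Type*} [CommRing R]

theorem det_mul_eq_sum_prod_mul_det_submatrix [Fintype m] [DecidableEq m] [Fintype n]
    (A : Matrix m n R) (B : Matrix n m R) :
    (A * B).det = ∑ f : m → n, (∏ l, A l (f l)) * (B.submatrix f id).det := by
  classical
  have hrows : A * B = fun l => ∑ i, A l i • B i := by
    ext l k
    simp only [mul_apply, Finset.sum_apply, Pi.smul_apply, smul_eq_mul]
  rw [hrows]
  exact (detRowAlternating.toMultilinearMap.map_sum fun l i => A l i • B i).trans <|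
    sum_congr rfl fun f _ =>
      detRowAlternating.toMultilinearMap.map_smul_univ (fun l => A l (f l)) fun l => B (f l)

theorem orderEmb_comp_perm_injective {c : ℕ} [LinearOrder n] :
    Function.Injective fun p : (Fin c ↪o n) × Equiv.Perm (Fin c) => (p.1 ∘ p.2 : Fin c → n) := by
  rintro ⟨e, σ⟩ ⟨e', τ⟩ h
  have hrange : Set.range e = Set.range e' := by
    rw [← σ.surjective.range_comp e, ← τ.surjective.range_comp e']
    exact congrArg Set.range h
  obtain rfl : e = e' := OrderEmbedding.range_inj.1 hrange
  exact congrArg (Prod.mk e) (Equiv.ext fun k => e.injective (congrFun h k))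

theorem exists_orderEmb_comp_perm_eq {c : ℕ} [LinearOrder n] {f : Fin c → n}
    (hf : Function.Injective f) :
    ∃ (e : Fin c ↪o n) (σ : Equiv.Perm (Fin c)), e ∘ σ = f := by
  have hmono : StrictMono (f ∘ Tuple.sort f) :=
    (Tuple.monotone_sort f).strictMono_of_injective (hf.comp (Tuple.sort f).injective)
  refine ⟨OrderEmbedding.ofStrictMono _ hmono, (Tuple.sort f).symm, funext fun k => ?_⟩
  exact congrArg f ((Tuple.sort f).apply_symm_apply k)

theorem sum_eq_sum_orderEmb_sum_perm {M : Type*} [AddCommMonoid M] {c : ℕ} [Fintype n]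
    [LinearOrder n] (F : (Fin c → n) → M) (hF : ∀ f, ¬ Function.Injective f → F f = 0) :
    ∑ f, F f = ∑ e : Fin c ↪o n, ∑ σ : Equiv.Perm (Fin c), F (e ∘ σ) := by
  rw [← Fintype.sum_prod_type']
  refine (Fintype.sum_of_injective _ orderEmb_comp_perm_injective _ _ (fun f hf => ?_)
    fun _ => rfl).symm
  refine hF f fun hinj => hf ?_
  obtain ⟨e, σ, rfl⟩ := exists_orderEmb_comp_perm_eq hinj
  exact ⟨(e, σ), rfl⟩

theorem det_mul_eq_sum_orderEmb {c : ℕ} [Fintype n] [LinearOrder n]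
    (A : Matrix (Fin c) n R) (B : Matrix n (Fin c) R) :
    (A * B).det = ∑ e : Fin c ↪o n, (A.submatrix id e).det * (B.submatrix e id).det := by
  rw [det_mul_eq_sum_prod_mul_det_submatrix, sum_eq_sum_orderEmb_sum_perm]
  · refine sum_congr rfl fun e _ => ?_
    rw [← det_transpose (A.submatrix id e), det_apply', sum_mul]
    refine sum_congr rfl fun σ _ => ?_
    have hperm : (B.submatrix (e ∘ σ) id).det = Equiv.Perm.sign σ * (B.submatrix e id).det :=
      det_permute σ (B.submatrix e id)
    rw [hperm]
    simp only [transpose_apply, submatrix_apply, id_eq, Function.comp_apply]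
    ring
  · intro f hf
    obtain ⟨i, j, hij, hne⟩ := Function.not_injective_iff.1 hf
    rw [det_zero_of_row_eq hne (by ext; simp only [submatrix_apply, hij]), mul_zero]

theorem sum_powersetCard_univ_eq_sum_orderEmb {M : Type*} [AddCommMonoid M] {c : ℕ} [Fintype n]
    [LinearOrder n] (g : Finset n → M) :
    ∑ I ∈ powersetCard c univ, g I = ∑ e : Fin c ↪o n, g (univ.map e.toEmbedding) := by
  symm
  refine sum_bij (fun e _ => univ.map e.toEmbedding) ?_ ?_ ?_ ?_
  · intro e _
    simp
  · intro e _ e' _ h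
    have hrange := congrArg ((↑) : Finset n → Set n) h
    simp only [coe_map, coe_univ, Set.image_univ] at hrange
    exact OrderEmbedding.range_inj.1 hrange
  · intro I hI
    exact ⟨I.orderEmbOfFin (mem_powersetCard.1 hI).2, mem_univ _, I.map_orderEmbOfFin_univ _⟩
  · intro e _
    rfl

end CauchyBinet

section IndexSegments

/-- The first `t` elements of `Fin N`, or all of them if `N ≤ t`. -/
def firstIndices (N t : ℕ) : Finset (Fin N) :=
  {i | i.val < t}

/-- The last `t` elements of `Fin N`, or all of them if `N ≤ t`. -/
def lastIndices (N t : ℕ) : Finset (Fin N) :=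
  {i | N ≤ i.val + t}

variable {N t : ℕ}

theorem mem_firstIndices {i : Fin N} : i ∈ firstIndices N t ↔ i.val < t :=
  mem_filter_univ i

theorem mem_lastIndices {i : Fin N} : i ∈ lastIndices N t ↔ N ≤ i.val + t :=
  mem_filter_univ i

theorem map_revPerm_firstIndices :
    (firstIndices N t).map Fin.revPerm.toEmbedding = lastIndices N t := by
  ext i
  simp only [mem_firstIndices, mem_lastIndices, mem_map_equiv, Fin.revPerm_symm,
    Fin.revPerm_apply, Fin.val_rev]
  omega

theorem card_firstIndices_le : #(firstIndices N t) ≤ t :=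
  Fin.card_filter_val_lt.trans_le (min_le_right N t)

theorem card_lastIndices_le : #(lastIndices N t) ≤ t := by
  rw [← map_revPerm_firstIndices, card_map]
  exact card_firstIndices_le

theorem firstIndices_eq_map_castLEEmb {c : ℕ} (hN : c ≤ N) (l : Fin c) :
    firstIndices N l.val = (Iio l).map (Fin.castLEEmb hN) := by
  ext i
  simp only [mem_firstIndices, Fin.map_castLEEmb_Iio, mem_Iio, Fin.lt_def, Fin.val_castLE]

theorem nodal_firstIndices_comp_rev {R : Type*} [CommRing R] (u : Fin N → R) :
    nodal (firstIndices N t) (u ∘ Fin.rev) = nodal (lastIndices N t) u := by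
  rw [← map_revPerm_firstIndices, nodal, nodal, prod_map]
  rfl

end IndexSegments

section Vandermonde

variable {R : Type*} [CommRing R] {c : ℕ}

theorem det_eval_eq_det_coeff_mul_det_vandermonde (p : Fin c → R[X])
    (hp : ∀ l, (p l).natDegree < c) (x : Fin c → R) :
    (of fun l k => (p l).eval (x k)).det =
      (of fun l k : Fin c => (p l).coeff k).det * (vandermonde x).det := by
  rw [← det_transpose (vandermonde x), ← det_mul]
  congr 1
  ext l k
  simp only [of_apply, mul_apply, transpose_apply, vandermonde_apply]
  rw [eval_eq_sum_range' (hp l), sum_range]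

theorem det_vandermonde_eq_prod_Iio (x : Fin c → R) :
    (vandermonde x).det = ∏ i, ∏ j ∈ Iio i, (x i - x j) := by
  rw [det_vandermonde]
  exact prod_comm' fun i j => by simp only [mem_univ, mem_Ioi, mem_Iio, true_and, and_true]

theorem det_vandermonde_mul_det_vandermonde_comp_rev (x : Fin c → R) :
    (vandermonde x).det * (vandermonde (x ∘ Fin.rev)).det =
      ∏ i, ∏ j ∈ univ.erase i, (x i - x j) := by
  have hVrev : (vandermonde (x ∘ Fin.rev)).det = ∏ i, ∏ j ∈ Ioi i, (x i - x j) := by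
    rw [det_vandermonde, ← Equiv.prod_comp Fin.revPerm]
    simp only [Fin.revPerm_apply, ← Fin.map_revPerm_Iio, prod_map, Function.comp_apply,
      Equiv.coe_toEmbedding, Fin.rev_rev]
    exact prod_comm' fun i j => by simp only [mem_univ, mem_Ioi, mem_Iio, true_and, and_true]
  rw [det_vandermonde_eq_prod_Iio, hVrev, ← prod_mul_distrib]
  refine prod_congr rfl fun i _ => ?_
  rw [← prod_union (disjoint_left.2 fun j hj hj' => (mem_Iio.1 hj).asymm (mem_Ioi.1 hj'))]
  refine prod_congr ?_ fun _ _ => rfl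
  ext j
  simp only [mem_union, mem_Iio, mem_Ioi, mem_erase, mem_univ, and_true, lt_or_lt_iff_ne]

/-- The polynomial `∏_{i < l} (X - u i) * ∏_{j < c - 1 - l} (X - v j)`. For `l = 0, …, c - 1` these
interpolate between the Newton bases attached to `v` and to `u`, and all have degree less than
`c`. -/
noncomputable def mixedNodal {N M : ℕ} (u : Fin N → R) (v : Fin M → R) (l : Fin c) : R[X] :=
  nodal (firstIndices N l.val) u * nodal (firstIndices M l.rev.val) v

/-- The product of `u i - v j` over the corner `i + j ≤ c - 2` of the grid `Fin N × Fin M`. The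
opposite corner is obtained by composing `u` and `v` with `Fin.rev`. -/
def cornerProd {N M : ℕ} (c : ℕ) (u : Fin N → R) (v : Fin M → R) : R :=
  ∏ p : Fin N × Fin M with p.1.val + p.2.val + 2 ≤ c, (u p.1 - v p.2)

variable {N M : ℕ}

theorem cornerProd_comp_rev (u : Fin N → R) (v : Fin M → R) :
    cornerProd c (u ∘ Fin.rev) (v ∘ Fin.rev) =
      ∏ p : Fin N × Fin M with N + M ≤ p.1.val + p.2.val + c, (u p.1 - v p.2) := by
  rw [cornerProd, prod_filter, prod_filter,
    ← Equiv.prod_comp (Fin.revPerm.prodCongr Fin.revPerm)]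
  refine prod_congr rfl fun p _ => if_congr ?_ ?_ rfl
  · simp only [Equiv.prodCongr_apply, Prod.map_fst, Prod.map_snd, Fin.revPerm_apply, Fin.val_rev]
    omega
  · simp only [Equiv.prodCongr_apply, Prod.map_fst, Prod.map_snd, Fin.revPerm_apply,
      Function.comp_apply, Fin.rev_rev]

theorem natDegree_mixedNodal_lt (u : Fin N → R) (v : Fin M → R) (l : Fin c) :
    (mixedNodal u v l).natDegree < c := by
  rcases subsingleton_or_nontrivial R with _ | _
  · rw [natDegree_of_subsingleton]
    exact l.pos
  refine natDegree_mul_le.trans_lt ?_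
  have hu : #(firstIndices N l.val) ≤ l.val := card_firstIndices_le
  have hv : #(firstIndices M l.rev.val) ≤ l.rev.val := card_firstIndices_le
  rw [natDegree_nodal, natDegree_nodal]
  rw [Fin.val_rev] at hv ⊢
  omega

theorem prod_castLE_sub_eq_cornerProd (hN : c ≤ N) (u : Fin N → R) (v : Fin M → R) :
    ∏ l : Fin c, ∏ j ∈ firstIndices M l.rev.val, (u (l.castLE hN) - v j) = cornerProd c u v := by
  simp only [cornerProd, firstIndices, prod_filter, Fintype.prod_prod_type]
  refine Fintype.prod_of_injective _ (Fin.castLE_injective hN) _ _ (fun i hi => ?_) fun l => ?_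
  · refine prod_eq_one fun j _ => if_neg fun hij => hi ⟨⟨i, by omega⟩, rfl⟩
  · refine prod_congr rfl fun j _ => if_congr ?_ rfl rfl
    simp only [Fin.val_rev, Fin.val_castLE]
    omega

theorem det_eval_mixedNodal [IsDomain R] (hN : c ≤ N) {u : Fin N → R}
    (hu : Function.Injective u) (v : Fin M → R) (x : Fin c → R) :
    (of fun l k => (mixedNodal u v l).eval (x k)).det =
      cornerProd c u v * (vandermonde x).det := by
  -- The constant relating the two determinants is found at `x k = u k`, where the left one is that
  -- of a triangular matrix.
  have hdet := det_eval_eq_det_coeff_mul_det_vandermonde (mixedNodal u v (c := c))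
    (natDegree_mixedNodal_lt u v)
  set y : Fin c → R := u ∘ Fin.castLE hN
  have hy : (vandermonde y).det ≠ 0 :=
    det_vandermonde_ne_zero_iff.2 (hu.comp (Fin.castLE_injective hN))
  have htri : (of fun l k => (mixedNodal u v l).eval (y k)).IsUpperTriangular := fun l k hkl => by
    have hk : Fin.castLE hN k ∈ firstIndices N l.val := mem_firstIndices.2 hkl
    rw [of_apply, mixedNodal, eval_mul]
    exact mul_eq_zero_of_left (eval_nodal_at_node hk) _
  have hdiag : ∏ l, (mixedNodal u v l).eval (y l) = cornerProd c u v * (vandermonde y).det := by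
    simp only [mixedNodal, eval_mul, eval_nodal, prod_mul_distrib,
      firstIndices_eq_map_castLEEmb hN, prod_map, Fin.castLEEmb_apply]
    rw [← prod_castLE_sub_eq_cornerProd hN, det_vandermonde_eq_prod_Iio, mul_comm]
    rfl
  rw [hdet]
  congr 1
  refine mul_right_cancel₀ hy ?_
  rw [← hdet, det_of_isUpperTriangular htri, ← hdiag]
  rfl

theorem det_eval_mixedNodal_rev [IsDomain R] (hN : c ≤ N) {u : Fin N → R}
    (hu : Function.Injective u) (v : Fin M → R) (x : Fin c → R) :
    (of fun k m => (mixedNodal u v m.rev).eval (x k)).det =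
      cornerProd c u v * (vandermonde (x ∘ Fin.rev)).det := by
  rw [← det_eval_mixedNodal hN hu, ← det_transpose, ← det_submatrix_equiv_self Fin.revPerm]
  congr 1
  ext l k
  simp only [submatrix_apply, transpose_apply, of_apply, Fin.revPerm_apply, Fin.rev_rev,
    Function.comp_apply]

theorem det_sum_eval_mixedNodal_mul_eval_mixedNodal_rev [IsDomain R] {n : Type*} [Fintype n]
    [LinearOrder n] (hN : c ≤ N) {u : Fin N → R} (hu : Function.Injective u) (v : Fin M → R)
    (w x : n → R) :
    (of fun l m : Fin c => ∑ i, (mixedNodal u v l).eval (x i) *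
        (w i * (mixedNodal (u ∘ Fin.rev) (v ∘ Fin.rev) m.rev).eval (x i))).det =
      cornerProd c u v * cornerProd c (u ∘ Fin.rev) (v ∘ Fin.rev) *
        ∑ I ∈ powersetCard c univ, ∏ i ∈ I, (w i * ∏ j ∈ I.erase i, (x i - x j)) := by
  let A : Matrix (Fin c) n R := of fun l i => (mixedNodal u v l).eval (x i)
  let B : Matrix n (Fin c) R :=
    of fun i m => w i * (mixedNodal (u ∘ Fin.rev) (v ∘ Fin.rev) m.rev).eval (x i)
  have hminorA (e : Fin c ↪o n) :
      (A.submatrix id e).det = cornerProd c u v * (vandermonde (x ∘ e)).det :=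
    det_eval_mixedNodal hN hu v (x ∘ e)
  have hminorB (e : Fin c ↪o n) :
      (B.submatrix e id).det = (∏ k, w (e k)) * (cornerProd c (u ∘ Fin.rev) (v ∘ Fin.rev) *
        (vandermonde ((x ∘ e) ∘ Fin.rev)).det) := by
    rw [← det_eval_mixedNodal_rev hN (hu.comp Fin.rev_injective), ← det_mul_column]
    rfl
  calc (A * B).det = ∑ e : Fin c ↪o n, (A.submatrix id e).det * (B.submatrix e id).det :=
        det_mul_eq_sum_orderEmb A B
    _ = _ := by
        rw [sum_powersetCard_univ_eq_sum_orderEmb, mul_sum]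
        refine sum_congr rfl fun e _ => ?_
        have herase (k : Fin c) :
            (univ.map e.toEmbedding).erase (e k) = (univ.erase k).map e.toEmbedding :=
          (map_erase e.toEmbedding univ k).symm
        have hdisc :
            ∏ i ∈ univ.map e.toEmbedding, ∏ j ∈ (univ.map e.toEmbedding).erase i, (x i - x j) =
              (vandermonde (x ∘ e)).det * (vandermonde ((x ∘ e) ∘ Fin.rev)).det := by
          rw [det_vandermonde_mul_det_vandermonde_comp_rev, prod_map]
          simp only [RelEmbedding.coe_toEmbedding, herase, prod_map, Function.comp_apply]
        rw [hminorA, hminorB, prod_mul_distrib, hdisc, prod_map]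
        simp only [RelEmbedding.coe_toEmbedding]
        ring

end Vandermonde

section DividedDifference

variable {K ι κ : Type*} [Field K] [DecidableEq ι] {s t : Finset ι} {v : ι → K}

/-- The divided difference over the nodes `v i`, `i ∈ s`, of a function taking the value `h i` at
`v i`. The values are indexed by `ι` so that they may be given by quotients with poles outside the
nodes. Meaningful only if `v` is injective on `s`. -/
def dividedDifference (s : Finset ι) (v h : ι → K) : K :=
  ∑ i ∈ s, nodalWeight s v i * h i

theorem dividedDifference_eval_eq_zero (hv : Set.InjOn v s) {p : K[X]}
    (hp : p.natDegree + 1 < #s) : dividedDifference s v (fun i => p.eval (v i)) = 0 := by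
  have hdeg : p.degree < #s :=
    degree_le_natDegree.trans_lt (WithBot.coe_lt_coe.2 ((Nat.lt_succ_self _).trans hp))
  have hcoeff : p.coeff (#s - 1) = 0 := coeff_eq_zero_of_natDegree_lt (by omega)
  rw [← hcoeff, coeff_eq_sum hv hdeg, dividedDifference]
  simp only [nodalWeight, prod_inv_distrib, div_eq_inv_mul]

theorem nodalWeight_eq_mul_nodalWeight_of_subset (hst : s ⊆ t) {i : ι} (hi : i ∈ s) :
    nodalWeight t v i = ((nodal (t \ s) v).eval (v i))⁻¹ * nodalWeight s v i := by
  have herase : t.erase i = t \ s ∪ s.erase i := by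
    rw [← sdiff_union_of_subset hst, erase_union_distrib,
      erase_eq_of_notMem fun h => (mem_sdiff.1 h).2 hi, sdiff_union_of_subset hst]
  rw [nodalWeight, herase, prod_union (disjoint_sdiff_self_left.mono_right (erase_subset i s)),
    prod_inv_distrib, eval_nodal, nodalWeight]

theorem dividedDifference_nodal_sdiff_mul (hv : Set.InjOn v t) (hst : s ⊆ t) (h : ι → K) :
    dividedDifference t v (fun i => (nodal (t \ s) v).eval (v i) * h i) =
      dividedDifference s v h := by
  rw [dividedDifference, ← sum_subset hst fun i hi his => by
    rw [eval_nodal_at_node (mem_sdiff.2 ⟨hi, his⟩), zero_mul, mul_zero]]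
  refine sum_congr rfl fun i hi => ?_
  have hne : (nodal (t \ s) v).eval (v i) ≠ 0 := eval_nodal_not_at_node fun j hj hij =>
    (mem_sdiff.1 hj).2 (hv (hst hi) (mem_sdiff.1 hj).1 hij ▸ hi)
  rw [nodalWeight_eq_mul_nodalWeight_of_subset hst hi]
  field_simp

theorem dividedDifference_div_eq_sum (x y : ι → K) :
    dividedDifference s v (fun i => x i / y i) =
      ∑ i ∈ s, x i / ((∏ j ∈ s.erase i, (v i - v j)) * y i) := by
  refine sum_congr rfl fun i _ => ?_
  rw [nodalWeight, prod_inv_distrib]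
  ring

theorem nodalWeight_mul_prod_erase (hv : Set.InjOn v s) {i : ι} (hi : i ∈ s) :
    nodalWeight s v i * ∏ j ∈ s.erase i, (v i - v j) = 1 := by
  rw [nodalWeight, prod_inv_distrib]
  exact inv_mul_cancel₀ <| prod_ne_zero_iff.2 fun j hj =>
    sub_ne_zero.2 fun h => ne_of_mem_erase hj (hv hi (mem_of_mem_erase hj) h).symm

theorem prod_mul_prod_nodalWeight_mul_prod_erase [Fintype ι] (hv : Function.Injective v)
    {f : ι → K} (hf : ∀ i, f i ≠ 0) (y : ι → K) (I : Finset ι) :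
    (∏ i, f i) * ∏ i ∈ I,
        (nodalWeight univ v i * (y i / f i) * ∏ j ∈ I.erase i, (v i - v j)) =
      ((∏ i ∈ Iᶜ, f i) * ∏ i ∈ I, y i) / ∏ i ∈ I, ∏ j ∈ Iᶜ, (v i - v j) := by
  have hfactor (i : ι) (hi : i ∈ I) :
      nodalWeight univ v i * (y i / f i) * ∏ j ∈ I.erase i, (v i - v j) =
        y i / f i / ∏ j ∈ Iᶜ, (v i - v j) := by
    rw [nodalWeight_eq_mul_nodalWeight_of_subset (subset_univ I) hi, ← compl_eq_univ_sdiff,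
      eval_nodal]
    linear_combination
      (∏ j ∈ Iᶜ, (v i - v j))⁻¹ * (y i / f i) * nodalWeight_mul_prod_erase hv.injOn hi
  have hfI : ∏ i ∈ I, f i ≠ 0 := prod_ne_zero_iff.2 fun i _ => hf i
  rw [prod_congr rfl hfactor, prod_div_distrib, prod_div_distrib, ← prod_mul_prod_compl I]
  field_simp

variable [DecidableEq κ] [Fintype κ] {β : κ → K}

theorem eval_nodal_mul_eval_nodal_div {x : K} (hx : ∀ j, x ≠ β j) (y : K) (L R : Finset κ) :
    (nodal L β).eval x * (nodal R β).eval x * (y / (nodal univ β).eval x) =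
      y * (nodal (L ∩ R) β).eval x / (nodal (L ∪ R)ᶜ β).eval x := by
  have hne : ∀ T : Finset κ, (nodal T β).eval x ≠ 0 := fun T =>
    eval_nodal_not_at_node fun j _ => hx j
  have hLR : (nodal L β).eval x * (nodal R β).eval x =
      (nodal (L ∪ R) β).eval x * (nodal (L ∩ R) β).eval x := by
    simp only [eval_nodal, prod_union_inter]
  have huniv : (nodal univ β).eval x =
      (nodal (L ∪ R) β).eval x * (nodal (L ∪ R)ᶜ β).eval x := by
    simp only [eval_nodal, prod_mul_prod_compl]
  have hunion := hne (L ∪ R)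
  have hcompl := hne (L ∪ R)ᶜ
  rw [hLR, huniv]
  field_simp

theorem dividedDifference_nodal_mul_nodal_mul_div (hv : Set.InjOn v s)
    (hvβ : ∀ i ∈ s, ∀ j, v i ≠ β j) {g : K[X]} {L R : Finset κ}
    (hLR : Disjoint L R ∨ L ∪ R = univ ∧ g.natDegree + #(L ∩ R) + 1 < #s) :
    dividedDifference s v (fun i => (nodal L β).eval (v i) * (nodal R β).eval (v i) *
        (g.eval (v i) / (nodal univ β).eval (v i))) =
      dividedDifference s v (fun i => g.eval (v i) / (nodal (L ∪ R)ᶜ β).eval (v i)) := by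
  have hcancel : dividedDifference s v (fun i => (nodal L β).eval (v i) * (nodal R β).eval (v i) *
        (g.eval (v i) / (nodal univ β).eval (v i))) =
      dividedDifference s v
        (fun i => (g * nodal (L ∩ R) β).eval (v i) / (nodal (L ∪ R)ᶜ β).eval (v i)) :=
    sum_congr rfl fun i hi => congrArg (nodalWeight s v i * ·) <| by
      dsimp only
      rw [eval_nodal_mul_eval_nodal_div (hvβ i hi), eval_mul]
  rw [hcancel]
  rcases hLR with hdisj | ⟨huniv, hcard⟩
  · rw [disjoint_iff_inter_eq_empty.1 hdisj, nodal_empty, mul_one]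
  · have hdeg : (g * nodal (L ∩ R) β).natDegree ≤ g.natDegree + #(L ∩ R) :=
      natDegree_mul_le.trans_eq (by rw [natDegree_nodal])
    -- Both sides are divided differences of polynomials of degree less than `#s - 1`.
    simp only [huniv, compl_univ, nodal_empty, eval_one, div_one]
    rw [dividedDifference_eval_eq_zero hv (by omega), dividedDifference_eval_eq_zero hv (by omega)]

end DividedDifference

section DeterminantFormula

variable {R K : Type*} [CommRing R] [Field K] {a b c : ℕ}

/-- The nodes `α i` entering the `(l, m)` entry of the determinant. -/
def nodeWindow (b : ℕ) (l m : Fin c) : Finset (Fin (b + c)) :=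
  {i | l.val ≤ i.val ∧ i.val ≤ b + m.val}

/-- The poles `β j` entering the `(l, m)` entry of the determinant. This window is empty when
`a + l + 1 ≤ m`. -/
def poleWindow (a : ℕ) (l m : Fin c) : Finset (Fin (a + c)) :=
  {j | c - 1 - l.val ≤ j.val ∧ j.val ≤ a + c - 1 - m.val}

theorem univ_sdiff_nodeWindow (l m : Fin c) :
    univ \ nodeWindow b l m = firstIndices (b + c) l.val ∪ lastIndices (b + c) m.rev.val := by
  ext i
  simp only [nodeWindow, mem_sdiff, mem_filter, mem_univ, true_and, mem_union, mem_firstIndices,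
    mem_lastIndices, Fin.val_rev]
  omega

theorem poleWindow_eq_compl (l m : Fin c) :
    poleWindow a l m =
      (firstIndices (a + c) l.rev.val ∪ lastIndices (a + c) m.val)ᶜ := by
  ext j
  simp only [poleWindow, mem_compl, mem_filter, mem_univ, true_and, mem_union, mem_firstIndices,
    mem_lastIndices, Fin.val_rev]
  omega

theorem firstIndices_inter_lastIndices_of_mem_nodeWindow {l m : Fin c} {i : Fin (b + c)}
    (hi : i ∈ nodeWindow b l m) :
    firstIndices (b + c) l.val ∩ lastIndices (b + c) m.rev.val = ∅ := by
  obtain ⟨hli, him⟩ := (mem_filter_univ i).1 hi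
  refine disjoint_iff_inter_eq_empty.1 (disjoint_left.2 fun k => ?_)
  rw [mem_firstIndices, mem_lastIndices, Fin.val_rev]
  omega

theorem mixedNodal_mul_mixedNodal_rev (α : Fin (b + c) → R) (β : Fin (a + c) → R)
    (l m : Fin c) :
    mixedNodal α β l * mixedNodal (α ∘ Fin.rev) (β ∘ Fin.rev) m.rev =
      nodal (univ \ nodeWindow b l m) α *
        (nodal (firstIndices (b + c) l.val ∩ lastIndices (b + c) m.rev.val) α *
          (nodal (firstIndices (a + c) l.rev.val) β * nodal (lastIndices (a + c) m.val) β)) := by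
  have hα : nodal (firstIndices (b + c) l.val) α * nodal (lastIndices (b + c) m.rev.val) α =
      nodal (univ \ nodeWindow b l m) α *
        nodal (firstIndices (b + c) l.val ∩ lastIndices (b + c) m.rev.val) α := by
    rw [univ_sdiff_nodeWindow]
    exact prod_union_inter.symm
  simp only [mixedNodal, nodal_firstIndices_comp_rev, Fin.rev_rev]
  linear_combination
    nodal (firstIndices (a + c) l.rev.val) β * nodal (lastIndices (a + c) m.val) β * hα

theorem disjoint_or_card_lt_card_nodeWindow {d : ℕ} (hd : d ≤ a + b) (l m : Fin c) :
    Disjoint (firstIndices (a + c) l.rev.val) (lastIndices (a + c) m.val) ∨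
      firstIndices (a + c) l.rev.val ∪ lastIndices (a + c) m.val = univ ∧
        d + #(firstIndices (a + c) l.rev.val ∩ lastIndices (a + c) m.val) + 1 <
          #(nodeWindow b l m) := by
  rcases le_or_gt m.val (a + l.val + 1) with hm | hm
  · refine Or.inl (disjoint_left.2 fun j => ?_)
    rw [mem_firstIndices, mem_lastIndices, Fin.val_rev]
    omega
  set L := firstIndices (a + c) l.rev.val with hL
  set R := lastIndices (a + c) m.val with hR
  have hcover : L ∪ R = univ := by
    ext j
    simp only [hL, hR, mem_union, mem_firstIndices, mem_lastIndices, mem_univ, iff_true,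
      Fin.val_rev]
    omega
  have hLcard : #L ≤ l.rev.val := card_firstIndices_le
  have hRcard : #R ≤ m.val := card_lastIndices_le
  have hinter : #(L ∪ R) + #(L ∩ R) = #L + #R := card_union_add_card_inter L R
  have hcompl : #(univ \ nodeWindow b l m) ≤ l.val + m.rev.val := by
    rw [univ_sdiff_nodeWindow]
    exact (card_union_le _ _).trans (add_le_add card_firstIndices_le card_lastIndices_le)
  have hwindow : #(univ \ nodeWindow b l m) + #(nodeWindow b l m) = b + c := by
    rw [card_sdiff_add_card_eq_card (subset_univ _), card_univ, Fintype.card_fin]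
  rw [hcover, card_univ, Fintype.card_fin] at hinter
  rw [Fin.val_rev] at hLcard hcompl
  exact Or.inr ⟨hcover, by omega⟩

theorem dividedDifference_nodeWindow_eq_sum {α : Fin (b + c) → K} {β : Fin (a + c) → K}
    (hα : Function.Injective α) (hαβ : ∀ i j, α i ≠ β j) {g : K[X]} (hg : g.natDegree ≤ a + b)
    (l m : Fin c) :
    dividedDifference (nodeWindow b l m) α
        (fun i => g.eval (α i) / (nodal (poleWindow a l m) β).eval (α i)) =
      ∑ i, (mixedNodal α β l).eval (α i) *
        (nodalWeight univ α i * (g.eval (α i) / (nodal univ β).eval (α i)) *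
          (mixedNodal (α ∘ Fin.rev) (β ∘ Fin.rev) m.rev).eval (α i)) := by
  set w : Fin (b + c) → K := fun i => g.eval (α i) / (nodal univ β).eval (α i)
  set L := firstIndices (a + c) l.rev.val
  set R := lastIndices (a + c) m.val
  set O := firstIndices (b + c) l.val ∩ lastIndices (b + c) m.rev.val
  calc
    _ = dividedDifference (nodeWindow b l m) α
          (fun i => (nodal L β).eval (α i) * (nodal R β).eval (α i) * w i) := by
        rw [poleWindow_eq_compl]
        exact (dividedDifference_nodal_mul_nodal_mul_div hα.injOn (fun i _ => hαβ i)
          (disjoint_or_card_lt_card_nodeWindow hg l m)).symm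
    -- `O` is nonempty only if the window is empty, namely for `b + m + 1 < l`.
    _ = dividedDifference (nodeWindow b l m) α
          (fun i => (nodal O α).eval (α i) *
            ((nodal L β).eval (α i) * (nodal R β).eval (α i) * w i)) :=
        sum_congr rfl fun i hi => by
          have hO : O = ∅ := firstIndices_inter_lastIndices_of_mem_nodeWindow hi
          simp only [hO, nodal_empty, eval_one, one_mul]
    _ = dividedDifference univ α
          (fun i => (nodal (univ \ nodeWindow b l m) α).eval (α i) * ((nodal O α).eval (α i) *
            ((nodal L β).eval (α i) * (nodal R β).eval (α i) * w i))) :=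
        (dividedDifference_nodal_sdiff_mul hα.injOn (subset_univ _) _).symm
    _ = _ := sum_congr rfl fun i _ => by
        have hfactors := congrArg (eval (α i)) (mixedNodal_mul_mixedNodal_rev α β l m)
        simp only [eval_mul] at hfactors
        linear_combination -(nodalWeight univ α i * w i) * hfactors

theorem sum_filter_div_eq_sum_mixedNodal {α : Fin (b + c) → K} {β : Fin (a + c) → K}
    (hα : Function.Injective α) (hαβ : ∀ i j, α i ≠ β j) {g : K[X]} (hg : g.natDegree ≤ a + b)
    (l m : Fin c) :
    ∑ i : Fin (b + c) with l.val ≤ i.val ∧ i.val ≤ b + m.val,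
        g.eval (α i) /
          ((∏ i' : Fin (b + c) with (l.val ≤ i'.val ∧ i'.val ≤ b + m.val) ∧ i' ≠ i,
              (α i - α i')) *
            ∏ j : Fin (a + c) with c - 1 - l.val ≤ j.val ∧ j.val ≤ a + c - 1 - m.val,
              (α i - β j)) =
      ∑ i, (mixedNodal α β l).eval (α i) *
        (nodalWeight univ α i * (g.eval (α i) / (nodal univ β).eval (α i)) *
          (mixedNodal (α ∘ Fin.rev) (β ∘ Fin.rev) m.rev).eval (α i)) := by
  rw [← dividedDifference_nodeWindow_eq_sum hα hαβ hg, dividedDifference_div_eq_sum]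
  have herase (i : Fin (b + c)) :
      ({i' | (l.val ≤ i'.val ∧ i'.val ≤ b + m.val) ∧ i' ≠ i} : Finset (Fin (b + c))) =
        (nodeWindow b l m).erase i :=
    (filter_filter _ _ _).symm.trans (filter_ne' _ i)
  simp only [herase, eval_nodal]
  rfl

theorem prod_filter_mul_cornerProd_mul_cornerProd_rev (α : Fin (b + c) → R)
    (β : Fin (a + c) → R) :
    (∏ p : Fin (b + c) × Fin (a + c) with
        c < p.1.val + 1 + (p.2.val + 1) ∧ p.1.val + 1 + (p.2.val + 1) ≤ a + b + c + 1,
        (α p.1 - β p.2)) *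
      (cornerProd c α β * cornerProd c (α ∘ Fin.rev) (β ∘ Fin.rev)) =
      ∏ i, ∏ j, (α i - β j) := by
  rw [cornerProd_comp_rev, cornerProd, ← prod_union, ← prod_union, ← Fintype.prod_prod_type']
  · refine prod_congr ?_ fun _ _ => rfl
    ext p
    simp only [mem_union, mem_filter, mem_univ, true_and, iff_true]
    omega
  all_goals
    refine disjoint_left.2 fun p => ?_
    simp only [mem_union, mem_filter, mem_univ, true_and]
    omega

theorem Phi_eq_det_general {α : Fin (b + c) → K} {β : Fin (a + c) → K}
    (hα : Function.Injective α) (hαβ : ∀ i j, α i ≠ β j) {g : K[X]}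
    (hg : g.natDegree ≤ a + b) :
    ∑ I ∈ powersetCard c (univ : Finset (Fin (b + c))),
        ((∏ i ∈ Iᶜ, ∏ j, (α i - β j)) * ∏ i ∈ I, g.eval (α i)) /
          ∏ i ∈ I, ∏ j ∈ Iᶜ, (α i - α j) =
      (∏ p : Fin (b + c) × Fin (a + c) with
          c < p.1.val + 1 + (p.2.val + 1) ∧ p.1.val + 1 + (p.2.val + 1) ≤ a + b + c + 1,
          (α p.1 - β p.2)) *
        (of fun l m : Fin c =>
          ∑ i : Fin (b + c) with l.val ≤ i.val ∧ i.val ≤ b + m.val,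
            g.eval (α i) /
              ((∏ i' : Fin (b + c) with (l.val ≤ i'.val ∧ i'.val ≤ b + m.val) ∧ i' ≠ i,
                  (α i - α i')) *
                ∏ j : Fin (a + c) with c - 1 - l.val ≤ j.val ∧ j.val ≤ a + c - 1 - m.val,
                  (α i - β j))).det := by
  simp only [sum_filter_div_eq_sum_mixedNodal hα hαβ hg]
  rw [det_sum_eval_mixedNodal_mul_eval_mixedNodal_rev (Nat.le_add_left c b) hα, ← mul_assoc,
    prod_filter_mul_cornerProd_mul_cornerProd_rev, mul_sum]
  refine sum_congr rfl fun I _ => ?_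
  simp only [eval_nodal]
  refine (prod_mul_prod_nodalWeight_mul_prod_erase hα (fun i => ?_) _ I).symm
  exact prod_ne_zero_iff.2 fun j _ => sub_ne_zero.2 (hαβ i j)

end DeterminantFormula

end Development

/-- The determinant formula (Eq. (3.6) of the paper), obtained from the
Lindström–Gessel–Viennot evaluation of the plane-partition partition function.
All indices here are 0-based; the paper's 1-based index `ℓ` corresponds to `ℓ.1 + 1`, etc. -/
theorem Phi_eq_det (a b c : ℕ)
    (α : Fin (b + c) → ℂ) (β : Fin (a + c) → ℂ) (γ : Fin (a + b) → ℂ)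
    (hα : Function.Injective α) (hαβ : ∀ i j, α i ≠ β j) :
    Phi a b c α β γ =
      (∏ p ∈ Finset.univ.filter
          (fun p : Fin (b + c) × Fin (a + c) =>
            c < p.1.1 + 1 + (p.2.1 + 1) ∧ p.1.1 + 1 + (p.2.1 + 1) ≤ a + b + c + 1),
        (α p.1 - β p.2)) *
      Matrix.det (Matrix.of fun ℓ m : Fin c =>
        ∑ i ∈ Finset.univ.filter
            (fun i : Fin (b + c) => ℓ.1 ≤ i.1 ∧ i.1 ≤ b + m.1),
          (∏ k, (α i - γ k)) /
            ((∏ i' ∈ Finset.univ.filter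
                (fun i' : Fin (b + c) => (ℓ.1 ≤ i'.1 ∧ i'.1 ≤ b + m.1) ∧ i' ≠ i),
              (α i - α i')) *
             ∏ j ∈ Finset.univ.filter
                (fun j : Fin (a + c) => c - 1 - ℓ.1 ≤ j.1 ∧ j.1 ≤ a + c - 1 - m.1),
              (α i - β j))) := by
  simpa only [Phi, Lagrange.eval_nodal] using
    Phi_eq_det_general hα hαβ (Lagrange.natDegree_nodal.trans_le (Finset.card_fin (a + b)).le)
end

section
/- For all nonnegative integers a, b, c there exists a unique polynomial function P : ℂ^{b+c} × ℂ^{a+c} × ℂ^{a+b} → ℂ such that P(α; β; γ) = Φ_{a,b,c}(α; β; γ) for every tuple in which the α_i are pairwise distinct. Moreover P is homogeneous of total degree ab + bc + ca, has degree at most a in each variable α_i, degree at most b in each variable β_j, and degree at most c in each variable γ_k. -/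
/-- A function `P : ℂ^{b+c} × ℂ^{a+c} × ℂ^{a+b} → ℂ` is a polynomial function if it is
given by the evaluation of a multivariate polynomial in all of the variables. -/
def IsPolyFun (a b c : ℕ)
    (P : (Fin (b + c) → ℂ) → (Fin (a + c) → ℂ) → (Fin (a + b) → ℂ) → ℂ) : Prop :=
  ∃ p : MvPolynomial (Fin (b + c) ⊕ Fin (a + c) ⊕ Fin (a + b)) ℂ,
    ∀ α β γ, P α β γ = MvPolynomial.eval (Sum.elim α (Sum.elim β γ)) p

/-!
The sum `Φ` is a quotient of two determinants. Put `f(x) = ∏ (x - β_j)` and `g(x) = ∏ (x - γ_k)`,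
and let `D` be the determinant whose `i`-th row consists of `f(α_i) α_i ^ k` for `k < b` followed by
`g(α_i) α_i ^ l` for `l < c`. The generalised Laplace expansion of `D` along its last `c` columns
is a sum over the sets `I` of `c` rows, and both minors in each term are Vandermonde determinants
which together amount to `V(α) / ∏_{i ∈ I, j ∉ I} (α_i - α_j)`; hence `Φ = D / V(α)`.

Since `α_i` is a root of `A(x) = ∏ (x - α_i)`, the polynomials `f(x) x ^ k` and `g(x) x ^ l`
may be replaced by their remainders modulo `A`, which exhibits `D` as `V(α)` times a determinant of
coefficients, so the quotient is a polynomial. Its degrees are read off from `D` and `V(α)`.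
-/

section Graded

theorem mem_of_mul_mem_of_right_mem {ι A σ : Type*} [DecidableEq ι] [AddRightCancelMonoid ι]
    [Semiring A] [NoZeroDivisors A] [SetLike σ A] [AddSubmonoidClass σ A] (𝒜 : ι → σ)
    [GradedRing 𝒜] {x y : A} {m n : ι} (hxy : x * y ∈ 𝒜 (m + n)) (hy : y ∈ 𝒜 n) (hy₀ : y ≠ 0) :
    x ∈ 𝒜 m := by
  classical
  have component_eq_zero {i : ι} (hi : i ≠ m) : (DirectSum.decompose 𝒜 x i : A) = 0 := by
    have h := DirectSum.coe_decompose_mul_add_of_right_mem 𝒜 (i := i) (a := x) hy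
    rw [DirectSum.decompose_of_mem_ne 𝒜 hxy fun h => hi (add_right_cancel h).symm] at h
    exact (mul_eq_zero.1 h.symm).resolve_right hy₀
  rw [← DirectSum.sum_support_decompose 𝒜 x]
  refine sum_mem fun i _ => ?_
  rcases eq_or_ne i m with rfl | hi
  · exact SetLike.coe_mem _
  · simp [component_eq_zero hi]

end Graded

section Degrees

open MvPolynomial Matrix Finset

variable {R σ ι : Type*}

theorem isHomogeneous_of_mul_of_right [CommSemiring R] [NoZeroDivisors R] {p q : MvPolynomial σ R}
    {m n : ℕ} (hpq : (p * q).IsHomogeneous (m + n)) (hq : q.IsHomogeneous n) (hq₀ : q ≠ 0) :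
    p.IsHomogeneous m :=
  letI := gradedAlgebra (σ := σ) (R := R)
  mem_of_mul_mem_of_right_mem (homogeneousSubmodule σ R) hpq hq hq₀

theorem degreeOf_le_of_degreeOf_mul_le [CommSemiring R] [NoZeroDivisors R]
    {p q : MvPolynomial σ R} {v : σ} {d : ℕ} (hq₀ : q ≠ 0)
    (h : degreeOf v (p * q) ≤ d + degreeOf v q) : degreeOf v p ≤ d := by
  rcases eq_or_ne p 0 with rfl | hp₀
  · simp
  · rwa [degreeOf_mul_eq hp₀ hq₀, Nat.add_le_add_iff_right] at h

variable [CommRing R]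

theorem isHomogeneous_det [Fintype ι] [DecidableEq ι] {M : Matrix ι ι (MvPolynomial σ R)}
    {r s : ι → ℕ} (hM : ∀ i j, (M i j).IsHomogeneous (r i + s j)) :
    M.det.IsHomogeneous (∑ i, r i + ∑ j, s j) := by
  rw [det_apply]
  refine IsHomogeneous.sum _ _ _ fun τ _ => ?_
  have hprod := IsHomogeneous.prod univ _ _ fun i _ => hM (τ i) i
  rw [sum_add_distrib, Equiv.sum_comp τ r] at hprod
  exact (homogeneousSubmodule σ R _).smul_of_tower_mem _ hprod

theorem degreeOf_det_le [Fintype ι] [DecidableEq ι] {M : Matrix ι ι (MvPolynomial σ R)} {v : σ}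
    {r s : ι → ℕ} (hM : ∀ i j, degreeOf v (M i j) ≤ r i + s j) :
    degreeOf v M.det ≤ ∑ i, r i + ∑ j, s j := by
  rw [det_apply]
  refine (degreeOf_sum_le _ _ _).trans (Finset.sup_le fun τ _ => ?_)
  have hprod : degreeOf v (∏ i, M (τ i) i) ≤ ∑ i, r i + ∑ j, s j := by
    rw [← Equiv.sum_comp τ r, ← sum_add_distrib]
    exact (degreeOf_prod_le _ _ _).trans (sum_le_sum fun i _ => hM (τ i) i)
  rcases Int.units_eq_one_or (Equiv.Perm.sign τ) with h | h <;> simpa [h, degreeOf_neg] using hprod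

theorem one_le_degreeOf_X_sub_X [Nontrivial R] {u v w : σ} (huw : u ≠ w) (hv : v = u ∨ v = w) :
    1 ≤ degreeOf v (X u - X w : MvPolynomial σ R) := by
  classical
  wlog hvu : v = u generalizing u w
  · rw [← degreeOf_neg, neg_sub]
    exact this huw.symm hv.symm (hv.resolve_left hvu)
  subst hvu
  have h := degreeOf_add_le v (X v - X w : MvPolynomial σ R) (X w)
  simpa [degreeOf_X, huw] using h

theorem le_degreeOf_det_vandermonde_X [IsDomain R] {n : ℕ} {e : Fin n → σ}
    (he : Function.Injective e) (i : Fin n) :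
    n - 1 ≤ degreeOf (e i) (vandermonde fun i => (X (e i) : MvPolynomial σ R)).det := by
  have factor_ne_zero {k l : Fin n} (hkl : l ∈ Ioi k) :
      (X (e l) - X (e k) : MvPolynomial σ R) ≠ 0 :=
    sub_ne_zero.2 fun h => (mem_Ioi.1 hkl).ne' (he (X_injective h))
  have factor_degree {k l : Fin n} (hkl : l ∈ Ioi k) :
      ((if k = i then 1 else 0) + if l = i then 1 else 0) ≤
        degreeOf (e i) (X (e l) - X (e k) : MvPolynomial σ R) := by
    have hlt := mem_Ioi.1 hkl
    have h := one_le_degreeOf_X_sub_X (R := R) (v := e i) (he.ne hlt.ne')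
    grind
  calc n - 1 = #(Ioi i) + #(Iio i) := by
        rw [Fin.card_Ioi, Fin.card_Iio]
        omega
    _ = ∑ k, ∑ l ∈ Ioi k, ((if k = i then 1 else 0) + if l = i then 1 else 0) := by
        simp [sum_add_distrib, ← filter_gt_eq_Iio]
    _ ≤ ∑ k, ∑ l ∈ Ioi k, degreeOf (e i) (X (e l) - X (e k) : MvPolynomial σ R) :=
        sum_le_sum fun k _ => sum_le_sum fun l => factor_degree
    _ = _ := by
        rw [det_vandermonde,
          degreeOf_prod_eq _ _ fun k _ => prod_ne_zero_iff.2 fun l => factor_ne_zero]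
        exact sum_congr rfl fun k _ => (degreeOf_prod_eq _ _ fun l => factor_ne_zero).symm

theorem isHomogeneous_det_vandermonde_X {n : ℕ} (e : Fin n → σ) :
    (vandermonde fun i => (X (e i) : MvPolynomial σ R)).det.IsHomogeneous
      (∑ k : Fin n, (k : ℕ)) := by
  simpa using isHomogeneous_det (r := 0) (s := fun k : Fin n => (k : ℕ))
    fun i k => by simpa using isHomogeneous_X_pow (R := R) (e i) (k : ℕ)

variable [Fintype ι]

theorem isHomogeneous_prod_X_sub_X_mul_X_pow (u : σ) (w : ι → σ) (k : ℕ) :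
    ((∏ j, (X u - X (w j))) * X u ^ k : MvPolynomial σ R).IsHomogeneous (Fintype.card ι + k) := by
  rw [Fintype.card_eq_sum_ones]
  have factor_isHomogeneous (j : ι) : (X u - X (w j) : MvPolynomial σ R).IsHomogeneous 1 :=
    (isHomogeneous_X R u).sub (isHomogeneous_X R (w j))
  exact (IsHomogeneous.prod _ _ _ fun j _ => factor_isHomogeneous j).mul (isHomogeneous_X_pow u k)

theorem degreeOf_prod_X_sub_X_mul_X_pow_le [DecidableEq σ] (u v : σ) (w : ι → σ) (k : ℕ) :
    degreeOf v ((∏ j, (X u - X (w j))) * X u ^ k : MvPolynomial σ R) ≤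
      (if v = u then Fintype.card ι + k else 0) + #{j | v = w j} := by
  rcases subsingleton_or_nontrivial R with _ | _
  · simp [Subsingleton.eq_zero (_ : MvPolynomial σ R)]
  have factor_degree (j : ι) : degreeOf v (X u - X (w j) : MvPolynomial σ R) ≤
      (if v = u then 1 else 0) + if v = w j then 1 else 0 := by
    grw [degreeOf_sub_le, degreeOf_X, degreeOf_X]
    exact max_le_add_of_nonneg zero_le zero_le
  grw [degreeOf_mul_le, degreeOf_prod_le, degreeOf_pow_le, degreeOf_X,
    sum_le_sum fun j _ => factor_degree j]
  rw [sum_add_distrib, card_filter]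
  split_ifs <;> simp [add_right_comm]

end Degrees

section Laplace

open Matrix Finset

variable {ι R : Type*}

theorem exists_perm_map_eq [Finite ι] {s t : Finset ι} (h : #s = #t) :
    ∃ σ : Equiv.Perm ι, s.map σ.toEmbedding = t := by
  classical
  let e := equivOfCardEq h
  refine ⟨e.extendSubtype, eq_of_subset_of_card_le (fun i hi => ?_) (by simp [h])⟩
  obtain ⟨j, hj, rfl⟩ := mem_map.1 hi
  exact e.extendSubtype_mem j hj

variable [Fintype ι] [DecidableEq ι]

theorem compl_map_perm (σ : Equiv.Perm ι) (s : Finset ι) :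
    (s.map σ.toEmbedding)ᶜ = sᶜ.map σ.toEmbedding := by
  ext i
  simp [mem_map_equiv]

theorem det_ite_mul_eq_sum_powersetCard [CommRing R] (t : Finset ι) (f g : ι → R)
    (C : Matrix ι ι R) :
    (of fun i j => (if j ∈ t then g i else f i) * C i j).det =
      ∑ I ∈ powersetCard #t univ, ((∏ i ∈ Iᶜ, f i) * ∏ i ∈ I, g i) *
        (of fun i j => if i ∈ I ↔ j ∈ t then C i j else 0).det := by
  simp only [det_apply', mul_sum, of_apply]
  rw [sum_comm]
  refine sum_congr rfl fun σ _ => ?_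
  rw [sum_eq_single_of_mem (t.map σ.toEmbedding) (by simp [mem_powersetCard])]
  · have weight_eq : ∏ i, (if i ∈ t then g (σ i) else f (σ i)) =
        (∏ i ∈ (t.map σ.toEmbedding)ᶜ, f i) * ∏ i ∈ t.map σ.toEmbedding, g i := by
      rw [compl_map_perm, prod_map, prod_map, prod_ite, mul_comm]
      simp [filter_notMem_eq_sdiff, compl_eq_univ_sdiff]
    rw [prod_mul_distrib, weight_eq]
    simp [mul_left_comm]
  · intro I _ hI
    obtain ⟨i, hi⟩ : ∃ i, ¬ (σ i ∈ I ↔ i ∈ t) := by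
      by_contra! h
      refine hI ?_
      ext i
      simpa [mem_map_equiv] using h (σ.symm i)
    rw [prod_eq_zero (mem_univ i) (if_neg hi), mul_zero, mul_zero]

end Laplace

section Vandermonde

open Matrix Finset Polynomial

variable {R : Type*} [CommRing R]

theorem of_eval_eq_vandermonde_mul_coeff_modByMonic {ι : Type*} {n : ℕ} (v : Fin n → R)
    (p : ι → R[X]) : (of fun i j => (p j).eval (v i)) =
      vandermonde v * of fun (k : Fin n) j => (p j %ₘ ∏ i, (X - C (v i))).coeff k := by
  nontriviality R
  set q := ∏ i, (X - C (v i)) with hq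
  have q_monic : q.Monic := monic_prod_X_sub_C v univ
  ext i j
  have q_root : q.eval (v i) = 0 := by
    rw [hq, eval_prod]
    exact prod_eq_zero (mem_univ i) (by simp)
  have eval_rem : (p j %ₘ q).eval (v i) = (p j).eval (v i) :=
    eval₂_modByMonic_eq_self_of_root q_root
  have degree_rem : (p j %ₘ q).degree < n := by
    refine (degree_modByMonic_lt (p j) q_monic).trans_eq ?_
    simp [hq, degree_prod_of_monic, monic_X_sub_C]
  rw [of_apply, ← eval_rem, eval_eq_sum, ← sum_fin _ (by simp) degree_rem]
  simp [mul_apply, mul_comm]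

theorem det_vandermonde_dvd_det_of_eval {n : ℕ} (v : Fin n → R) (p : Fin n → R[X]) :
    (vandermonde v).det ∣ (of fun i j => (p j).eval (v i)).det := by
  rw [of_eval_eq_vandermonde_mul_coeff_modByMonic, det_mul]
  exact dvd_mul_right _ _

theorem det_vandermonde_append {m n : ℕ} (u : Fin m → R) (v : Fin n → R) :
    (vandermonde (Fin.append u v)).det =
      (vandermonde u).det * (vandermonde v).det * ∏ j, ∏ i, (v j - u i) := by
  have castAdd_lt_natAdd (i : Fin m) (j : Fin n) : Fin.castAdd n i < Fin.natAdd m j := by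
    grind [Fin.lt_def, Fin.val_castAdd, Fin.val_natAdd]
  have castAdd_lt_castAdd_iff (i j : Fin m) : Fin.castAdd n i < Fin.castAdd n j ↔ i < j := Iff.rfl
  simp only [det_vandermonde, ← filter_lt_eq_Ioi, prod_filter, Fin.prod_univ_add, Fin.append_left,
    Fin.append_right, castAdd_lt_natAdd, (castAdd_lt_natAdd _ _).not_gt, castAdd_lt_castAdd_iff,
    Fin.natAdd_lt_natAdd_iff, if_true, if_false, prod_mul_distrib, prod_const_one]
  rw [prod_comm (f := fun i j => v j - u i)]
  ring

end Vandermonde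

section BlockVandermonde

open Matrix Finset

variable {R : Type*} [CommRing R] {b c : ℕ}

/-- The set of the last `c` indices in `Fin (b + c)`. -/
def lastBlock (b c : ℕ) : Finset (Fin (b + c)) :=
  univ.map (Fin.natAddEmb b)

@[simp]
theorem card_lastBlock : #(lastBlock b c) = c := by
  simp [lastBlock]

@[simp]
theorem natAdd_mem_lastBlock (l : Fin c) : Fin.natAdd b l ∈ lastBlock b c := by
  simp [lastBlock]

@[simp]
theorem castAdd_notMem_lastBlock (k : Fin b) : Fin.castAdd c k ∉ lastBlock b c := by
  simp only [lastBlock, mem_map, mem_univ, true_and, Fin.natAddEmb_apply, Fin.ext_iff,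
    Fin.val_natAdd, Fin.val_castAdd]
  omega

theorem compl_lastBlock : (lastBlock b c)ᶜ = univ.map (Fin.castAddEmb c) := by
  ext i
  refine Fin.addCases (fun k => ?_) (fun l => ?_) i
  · simp
  · simp only [mem_compl, natAdd_mem_lastBlock, not_true, mem_map, mem_univ, true_and,
      Fin.castAddEmb_apply, Fin.ext_iff, Fin.val_natAdd, Fin.val_castAdd, false_iff, not_exists]
    omega

/-- The matrix whose `i`-th row consists of `f i * α i ^ k` for `k < b` followed by
`g i * α i ^ l` for `l < c`: two Vandermonde blocks side by side with weighted rows. -/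
def blockVandermonde (f g α : Fin (b + c) → R) : Matrix (Fin (b + c)) (Fin (b + c)) R :=
  of fun i => Fin.append (fun k : Fin b => f i * α i ^ (k : ℕ)) fun l : Fin c => g i * α i ^ (l : ℕ)

/-- The unweighted block Vandermonde matrix in which the rows in `I` are kept only in the second
block and the other rows only in the first; its determinant is, up to sign, the product of two
complementary Vandermonde minors. -/
def splitVandermonde (α : Fin (b + c) → R) (I : Finset (Fin (b + c))) :
    Matrix (Fin (b + c)) (Fin (b + c)) R :=
  of fun i j => if i ∈ I ↔ j ∈ lastBlock b c then blockVandermonde 1 1 α i j else 0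

theorem map_det_blockVandermonde {S : Type*} [CommRing S] (φ : R →+* S) (f g α : Fin (b + c) → R) :
    φ (blockVandermonde f g α).det = (blockVandermonde (φ ∘ f) (φ ∘ g) (φ ∘ α)).det := by
  rw [RingHom.map_det]
  congr 1
  ext i j
  refine Fin.addCases (fun k => ?_) (fun l => ?_) j <;> simp [blockVandermonde]

theorem det_vandermonde_dvd_det_blockVandermonde (F G : Polynomial R) (α : Fin (b + c) → R) :
    (vandermonde α).det ∣
      (blockVandermonde (fun i => F.eval (α i)) (fun i => G.eval (α i)) α).det := by
  convert det_vandermonde_dvd_det_of_eval α (Fin.append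
    (fun k : Fin b => F * Polynomial.X ^ (k : ℕ))
    fun l : Fin c => G * Polynomial.X ^ (l : ℕ)) using 2
  ext i j
  refine Fin.addCases (fun k => ?_) (fun l => ?_) j <;> simp [blockVandermonde]

theorem det_blockVandermonde_eq_sum (f g α : Fin (b + c) → R) :
    (blockVandermonde f g α).det = ∑ I ∈ powersetCard c univ,
      ((∏ i ∈ Iᶜ, f i) * ∏ i ∈ I, g i) * (splitVandermonde α I).det := by
  have entry_eq : blockVandermonde f g α =
      of fun i j => (if j ∈ lastBlock b c then g i else f i) * blockVandermonde 1 1 α i j := by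
    ext i j
    refine Fin.addCases (fun k => ?_) (fun l => ?_) j <;> simp [blockVandermonde]
  rw [entry_eq, det_ite_mul_eq_sum_powersetCard, card_lastBlock]
  rfl

theorem det_splitVandermonde_lastBlock (α : Fin (b + c) → R) :
    (splitVandermonde α (lastBlock b c)).det =
      (vandermonde (α ∘ Fin.castAdd c)).det * (vandermonde (α ∘ Fin.natAdd b)).det := by
  rw [← det_fromBlocks_zero₁₂ _ 0, ← det_submatrix_equiv_self finSumFinEquiv]
  congr 1
  ext (k | l) (k' | l') <;> simp [splitVandermonde, blockVandermonde, vandermonde]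

theorem det_splitVandermonde_lastBlock_mul_prod_sub (α : Fin (b + c) → R) :
    (splitVandermonde α (lastBlock b c)).det *
      ∏ i ∈ lastBlock b c, ∏ j ∈ (lastBlock b c)ᶜ, (α i - α j) = (vandermonde α).det := by
  conv_rhs => rw [← Fin.append_castAdd_natAdd (f := α), det_vandermonde_append]
  rw [det_splitVandermonde_lastBlock, compl_lastBlock]
  simp [lastBlock, Function.comp_def]

theorem det_splitVandermonde_comp_perm (α : Fin (b + c) → R) (σ : Equiv.Perm (Fin (b + c)))
    (I : Finset (Fin (b + c))) :
    (splitVandermonde (α ∘ σ) I).det =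
      Equiv.Perm.sign σ * (splitVandermonde α (I.map σ.toEmbedding)).det := by
  rw [← det_permute]
  congr 1
  ext i j
  refine Fin.addCases (fun k => ?_) (fun l => ?_) j <;> simp [splitVandermonde, blockVandermonde]

theorem det_splitVandermonde_mul_prod_sub (α : Fin (b + c) → R) {I : Finset (Fin (b + c))}
    (hI : #I = c) :
    (splitVandermonde α I).det * ∏ i ∈ I, ∏ j ∈ Iᶜ, (α i - α j) = (vandermonde α).det := by
  obtain ⟨σ, rfl⟩ := exists_perm_map_eq ((card_lastBlock (b := b)).trans hI.symm)
  have sign_isUnit : IsUnit ((Equiv.Perm.sign σ : ℤ) : R) :=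
    (Equiv.Perm.sign σ).isUnit.map (Int.castRingHom R)
  have det_comp : (vandermonde (α ∘ σ)).det = Equiv.Perm.sign σ * (vandermonde α).det :=
    det_permute σ (vandermonde α)
  refine sign_isUnit.mul_left_cancel ?_
  rw [← det_comp, ← det_splitVandermonde_lastBlock_mul_prod_sub, det_splitVandermonde_comp_perm,
    compl_map_perm, mul_assoc]
  simp

theorem sum_div_prod_sub_mul_det_vandermonde {K : Type*} [Field K] (f g : Fin (b + c) → K)
    {α : Fin (b + c) → K} (hα : Function.Injective α) :
    (∑ I ∈ powersetCard c univ, ((∏ i ∈ Iᶜ, f i) * ∏ i ∈ I, g i) /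
      ∏ i ∈ I, ∏ j ∈ Iᶜ, (α i - α j)) * (vandermonde α).det = (blockVandermonde f g α).det := by
  rw [det_blockVandermonde_eq_sum, sum_mul]
  refine sum_congr rfl fun I hI => ?_
  have prod_sub_ne_zero : ∏ i ∈ I, ∏ j ∈ Iᶜ, (α i - α j) ≠ 0 :=
    prod_ne_zero_iff.2 fun i hi => prod_ne_zero_iff.2 fun j hj =>
      sub_ne_zero.2 fun h => mem_compl.1 hj (hα h ▸ hi)
  rw [← det_splitVandermonde_mul_prod_sub α (mem_powersetCard.1 hI).2]
  field_simp

end BlockVandermonde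

section NestedArches

open MvPolynomial Matrix Finset

/-- The formula defining `Phi`, over an arbitrary field; it is meaningful only for pairwise distinct
`α i`, since `x / 0 = 0`. -/
def archSum {K : Type*} [Field K] {a b c : ℕ} (α : Fin (b + c) → K) (β : Fin (a + c) → K)
    (γ : Fin (a + b) → K) : K :=
  ∑ I ∈ powersetCard c univ,
    ((∏ i ∈ Iᶜ, ∏ j, (α i - β j)) * ∏ i ∈ I, ∏ k, (α i - γ k)) / ∏ i ∈ I, ∏ j ∈ Iᶜ, (α i - α j)

/-- Indices for the variables `α_i`, `β_j`, `γ_k`, in this order. -/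
abbrev ArchVar (a b c : ℕ) := Fin (b + c) ⊕ Fin (a + c) ⊕ Fin (a + b)

variable (R : Type*) [CommRing R] (a b c : ℕ)

/-- The Vandermonde determinant in the variables `α_i`, the denominator of `archSum`. -/
noncomputable def archDenominator : MvPolynomial (ArchVar a b c) R :=
  (vandermonde fun i => X (Sum.inl i)).det

/-- The block Vandermonde determinant weighted by `∏ (α_i - β_j)` and `∏ (α_i - γ_k)`, the
numerator of `archSum` over `archDenominator`. -/
noncomputable def archNumerator : MvPolynomial (ArchVar a b c) R :=
  (blockVandermonde (b := b) (c := c) (fun i => ∏ j, (X (Sum.inl i) - X (Sum.inr (Sum.inl j))))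
    (fun i => ∏ k, (X (Sum.inl i) - X (Sum.inr (Sum.inr k)))) fun i => X (Sum.inl i)).det

theorem archDenominator_dvd_archNumerator : archDenominator R a b c ∣ archNumerator R a b c := by
  have h := det_vandermonde_dvd_det_blockVandermonde (R := MvPolynomial (ArchVar a b c) R)
    (∏ j, (Polynomial.X - Polynomial.C (X (Sum.inr (Sum.inl j)))))
    (∏ k, (Polynomial.X - Polynomial.C (X (Sum.inr (Sum.inr k))))) fun i => X (Sum.inl i)
  simpa only [archDenominator, archNumerator, Polynomial.eval_prod, Polynomial.eval_sub,
    Polynomial.eval_X, Polynomial.eval_C] using h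

theorem archDenominator_ne_zero [IsDomain R] : archDenominator R a b c ≠ 0 :=
  det_vandermonde_ne_zero_iff.2 (X_injective.comp Sum.inl_injective)

theorem archDenominator_isHomogeneous :
    (archDenominator R a b c).IsHomogeneous (∑ k : Fin (b + c), (k : ℕ)) :=
  isHomogeneous_det_vandermonde_X Sum.inl

theorem archNumerator_isHomogeneous : (archNumerator R a b c).IsHomogeneous
    (a * b + b * c + c * a + ∑ k : Fin (b + c), (k : ℕ)) := by
  let s : Fin (b + c) → ℕ :=
    Fin.append (fun k : Fin b => a + c + (k : ℕ)) fun l : Fin c => a + b + (l : ℕ)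
  have sum_s : ∑ i : Fin (b + c), 0 + ∑ j, s j =
      a * b + b * c + c * a + ∑ k : Fin (b + c), (k : ℕ) := by
    simp only [s, sum_const_zero, zero_add, Fin.sum_univ_add, Fin.append_left, Fin.append_right,
      Fin.val_castAdd, Fin.val_natAdd, sum_add_distrib, sum_const, card_univ, Fintype.card_fin,
      smul_eq_mul]
    ring
  rw [← sum_s]
  refine isHomogeneous_det fun i j => ?_
  refine Fin.addCases (fun k => ?_) (fun l => ?_) j
  · simpa [s, blockVandermonde] using isHomogeneous_prod_X_sub_X_mul_X_pow (R := R)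
      (Sum.inl i : ArchVar a b c) (fun j => Sum.inr (Sum.inl j)) k
  · simpa [s, blockVandermonde] using isHomogeneous_prod_X_sub_X_mul_X_pow (R := R)
      (Sum.inl i : ArchVar a b c) (fun k => Sum.inr (Sum.inr k)) l

variable {R a b c}

theorem degreeOf_archNumerator_le {v : ArchVar a b c} {r : Fin (b + c) → ℕ} {m n : ℕ}
    (hβ : ∀ i, ∀ k < b, (if v = Sum.inl i then a + c + k else 0) +
      #{j : Fin (a + c) | v = Sum.inr (Sum.inl j)} ≤ r i + m)
    (hγ : ∀ i, ∀ l < c, (if v = Sum.inl i then a + b + l else 0) +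
      #{k : Fin (a + b) | v = Sum.inr (Sum.inr k)} ≤ r i + n) :
    degreeOf v (archNumerator R a b c) ≤ ∑ i, r i + (b * m + c * n) := by
  let s : Fin (b + c) → ℕ := Fin.append (fun _ : Fin b => m) fun _ : Fin c => n
  have sum_s : ∑ j, s j = b * m + c * n := by simp [s, Fin.sum_univ_add]
  rw [← sum_s]
  refine degreeOf_det_le fun i j => ?_
  refine Fin.addCases (fun k => ?_) (fun l => ?_) j
  · simpa [s, blockVandermonde] using
      (degreeOf_prod_X_sub_X_mul_X_pow_le _ _ _ _).trans (by simpa using hβ i k k.2)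
  · simpa [s, blockVandermonde] using
      (degreeOf_prod_X_sub_X_mul_X_pow_le _ _ _ _).trans (by simpa using hγ i l l.2)

theorem degreeOf_inl_archNumerator_le [IsDomain R] (i : Fin (b + c)) :
    degreeOf (Sum.inl i) (archNumerator R a b c) ≤
      a + degreeOf (Sum.inl i) (archDenominator R a b c) := by
  have row_degree_le {d : ℕ} (hd : d ≤ a + (b + c - 1)) (j : Fin (b + c)) :
      (if (Sum.inl i : ArchVar a b c) = Sum.inl j then d else 0) ≤
        Pi.single (M := fun _ => ℕ) i (a + (b + c - 1)) j := by
    grind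
  have h := degreeOf_archNumerator_le (R := R) (v := (Sum.inl i : ArchVar a b c)) (m := 0) (n := 0)
    (fun j k hk => by simpa using row_degree_le (d := a + c + k) (by omega) j)
    (fun j l hl => by simpa using row_degree_le (d := a + b + l) (by omega) j)
  refine h.trans ?_
  simpa [archDenominator] using
    le_degreeOf_det_vandermonde_X (R := R) (Sum.inl_injective (β := Fin (a + c) ⊕ Fin (a + b))) i

theorem degreeOf_inr_inl_archNumerator_le (j : Fin (a + c)) :
    degreeOf (Sum.inr (Sum.inl j)) (archNumerator R a b c) ≤ b := by
  simpa using degreeOf_archNumerator_le (R := R) (v := (Sum.inr (Sum.inl j) : ArchVar a b c))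
    (r := 0) (m := 1) (n := 0) (by simp [filter_eq]) (by simp)

theorem degreeOf_inr_inr_archNumerator_le (k : Fin (a + b)) :
    degreeOf (Sum.inr (Sum.inr k)) (archNumerator R a b c) ≤ c := by
  simpa using degreeOf_archNumerator_le (R := R) (v := (Sum.inr (Sum.inr k) : ArchVar a b c))
    (r := 0) (m := 0) (n := 1) (by simp) (by simp [filter_eq])

theorem eval_archDenominator (α : Fin (b + c) → R) (β : Fin (a + c) → R) (γ : Fin (a + b) → R) :
    eval (Sum.elim α (Sum.elim β γ)) (archDenominator R a b c) = (vandermonde α).det := by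
  simp [archDenominator, det_vandermonde]

theorem eval_archNumerator (α : Fin (b + c) → R) (β : Fin (a + c) → R) (γ : Fin (a + b) → R) :
    eval (Sum.elim α (Sum.elim β γ)) (archNumerator R a b c) = (blockVandermonde (b := b) (c := c)
      (fun i => ∏ j, (α i - β j)) (fun i => ∏ k, (α i - γ k)) α).det := by
  simp [archNumerator, map_det_blockVandermonde, Function.comp_def]

variable {K : Type*} [Field K]

theorem archSum_mul_eval_archDenominator {α : Fin (b + c) → K} (hα : Function.Injective α)
    (β : Fin (a + c) → K) (γ : Fin (a + b) → K) :
    archSum α β γ * eval (Sum.elim α (Sum.elim β γ)) (archDenominator K a b c) =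
      eval (Sum.elim α (Sum.elim β γ)) (archNumerator K a b c) := by
  rw [eval_archDenominator, eval_archNumerator]
  exact sum_div_prod_sub_mul_det_vandermonde _ _ hα

theorem mul_archDenominator_eq_archNumerator_iff [Infinite K]
    {p : MvPolynomial (ArchVar a b c) K} :
    p * archDenominator K a b c = archNumerator K a b c ↔
      ∀ α β γ, Function.Injective α → eval (Sum.elim α (Sum.elim β γ)) p = archSum α β γ := by
  constructor
  · intro h α β γ hα
    have eval_ne_zero : eval (Sum.elim α (Sum.elim β γ)) (archDenominator K a b c) ≠ 0 := by
      rwa [eval_archDenominator, det_vandermonde_ne_zero_iff]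
    refine mul_right_cancel₀ eval_ne_zero ?_
    rw [← map_mul, h, archSum_mul_eval_archDenominator hα]
  · intro h
    refine MvPolynomial.funext fun v => ?_
    obtain ⟨α, β, γ, rfl⟩ : ∃ α β γ, v = Sum.elim α (Sum.elim β γ) :=
      ⟨v ∘ Sum.inl, v ∘ Sum.inr ∘ Sum.inl, v ∘ Sum.inr ∘ Sum.inr, by ext (i | j | k) <;> rfl⟩
    rw [map_mul]
    by_cases hα : Function.Injective α
    · rw [h α β γ hα, archSum_mul_eval_archDenominator hα]
    · obtain ⟨q, hq⟩ := archDenominator_dvd_archNumerator K a b c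
      have eval_eq_zero : eval (Sum.elim α (Sum.elim β γ)) (archDenominator K a b c) = 0 := by
        rwa [eval_archDenominator, ← not_ne_iff, det_vandermonde_ne_zero_iff]
      rw [hq, map_mul, eval_eq_zero, mul_zero, zero_mul]

end NestedArches

theorem Phi_polynomial_extension_general (K : Type*) [Field K] [Infinite K] (a b c : ℕ) :
    (∃! P : (Fin (b + c) → K) → (Fin (a + c) → K) → (Fin (a + b) → K) → K,
      (∃ p : MvPolynomial (ArchVar a b c) K, ∀ α β γ,
        P α β γ = MvPolynomial.eval (Sum.elim α (Sum.elim β γ)) p) ∧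
        ∀ α β γ, Function.Injective α → P α β γ = archSum α β γ) ∧
    ∀ (P : (Fin (b + c) → K) → (Fin (a + c) → K) → (Fin (a + b) → K) → K)
      (p : MvPolynomial (ArchVar a b c) K),
      (∀ α β γ, P α β γ = MvPolynomial.eval (Sum.elim α (Sum.elim β γ)) p) →
      (∀ α β γ, Function.Injective α → P α β γ = archSum α β γ) →
      p.IsHomogeneous (a * b + b * c + c * a) ∧
      (∀ i, p.degreeOf (Sum.inl i) ≤ a) ∧
      (∀ j, p.degreeOf (Sum.inr (Sum.inl j)) ≤ b) ∧
      (∀ k, p.degreeOf (Sum.inr (Sum.inr k)) ≤ c) := by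
  have denominator_ne_zero := archDenominator_ne_zero K a b c
  obtain ⟨p, hp⟩ := exists_eq_mul_left_of_dvd (archDenominator_dvd_archNumerator K a b c)
  have eq_p {P : _ → _ → _ → K} {q}
      (hq : ∀ α β γ, P α β γ = MvPolynomial.eval (Sum.elim α (Sum.elim β γ)) q)
      (hP : ∀ α β γ, Function.Injective α → P α β γ = archSum α β γ) : q = p :=
    mul_right_cancel₀ denominator_ne_zero <| hp ▸ mul_archDenominator_eq_archNumerator_iff.2
      fun α β γ hα => by rw [← hq, hP α β γ hα]
  refine ⟨⟨fun α β γ => MvPolynomial.eval (Sum.elim α (Sum.elim β γ)) p,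
    ⟨⟨p, fun _ _ _ => rfl⟩, mul_archDenominator_eq_archNumerator_iff.1 hp.symm⟩, ?_⟩, ?_⟩
  · rintro P ⟨⟨q, hq⟩, hP⟩
    obtain rfl := eq_p hq hP
    funext α β γ
    exact hq α β γ
  · intro P q hq hP
    obtain rfl := eq_p hq hP
    refine ⟨isHomogeneous_of_mul_of_right (hp ▸ archNumerator_isHomogeneous K a b c)
      (archDenominator_isHomogeneous K a b c) denominator_ne_zero, fun i => ?_, fun j => ?_,
      fun k => ?_⟩ <;> refine degreeOf_le_of_degreeOf_mul_le denominator_ne_zero ?_ <;> rw [← hp]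
    · exact degreeOf_inl_archNumerator_le i
    · exact (degreeOf_inr_inl_archNumerator_le j).trans (Nat.le_add_right _ _)
    · exact (degreeOf_inr_inr_archNumerator_le k).trans (Nat.le_add_right _ _)

/-- There is a unique polynomial function extending `Φ_{a,b,c}` from the locus where the
`α_i` are pairwise distinct; moreover (any polynomial representing) this extension is
homogeneous of total degree `ab + bc + ca`, of degree at most `a` in each `α_i`,
at most `b` in each `β_j`, and at most `c` in each `γ_k`. -/
theorem Phi_polynomial_extension (a b c : ℕ) :
    (∃! P : (Fin (b + c) → ℂ) → (Fin (a + c) → ℂ) → (Fin (a + b) → ℂ) → ℂ,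
      IsPolyFun a b c P ∧
        ∀ α β γ, Function.Injective α → P α β γ = Phi a b c α β γ) ∧
    ∀ (P : (Fin (b + c) → ℂ) → (Fin (a + c) → ℂ) → (Fin (a + b) → ℂ) → ℂ)
      (p : MvPolynomial (Fin (b + c) ⊕ Fin (a + c) ⊕ Fin (a + b)) ℂ),
      (∀ α β γ, P α β γ = MvPolynomial.eval (Sum.elim α (Sum.elim β γ)) p) →
      (∀ α β γ, Function.Injective α → P α β γ = Phi a b c α β γ) →
      p.IsHomogeneous (a * b + b * c + c * a) ∧
      (∀ i, p.degreeOf (Sum.inl i) ≤ a) ∧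
      (∀ j, p.degreeOf (Sum.inr (Sum.inl j)) ≤ b) ∧
      (∀ k, p.degreeOf (Sum.inr (Sum.inr k)) ≤ c) :=
  Phi_polynomial_extension_general ℂ a b c
end
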